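/- arXiv:1607.02285 — 2 statements merged into one kernel-verified Lean document; each statement's English description precedes it below -/
import Mathlib

section
/- Let R = B_r(0)∖closure(B_ρ(0)) ⊂ ℝⁿ be an annular region with 0 < ρ < r, let α > 0, x₀ ∈ ∂B_r(0), and let u be a function on closure(R) such that for some ε > 0, u(x₀) − u(x) ≥ ε(e^{−α‖x‖²} − e^{−αr²}) for all x ∈ closure(R). Then for every 0 < δ ≤ π/2 there exists ε' > 0 (one may take ε' = α e^{−αr²} r cos(π/2 − δ)) such that for every x ∈ K_δ(x₀) ∩ R ∩ B_{δ'}(x₀), where δ' := (r/2)cos(π/2 − δ), one has (u(x₀)−u(x))/‖x−x₀‖ ≥ ε'ε > 0. -/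
/-!
Write `d = ‖x - x₀‖` and `c = cos (π/2 - δ) > 0`. Expanding `x = x₀ - (x₀ - x)` gives
`r² - ‖x‖² = 2⟪x₀ - x, x₀⟫ - d²`; the cone condition bounds the inner product below by `c d r`, and
`d < r c / 2`, so `r² - ‖x‖² ≥ d (2 c r - d) ≥ c r d`. The inequality `1 + t ≤ exp t` at
`t = α (r² - ‖x‖²)` turns this into
`exp (-α‖x‖²) - exp (-α r²) ≥ α exp (-α r²) (r² - ‖x‖²) ≥ α exp (-α r²) c r d`,
and the hypothesis on `u` gives the claim after division by `d > 0`.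
-/

open Filter Metric Set Real
open scoped RealInnerProductSpace

noncomputable section

abbrev EucSp (n : ℕ) := EuclideanSpace ℝ (Fin n)

/-- The closed cone `K_δ(x₀)` with apex `x₀ ∈ ∂B_r(0)`, axis along the inner normal of
`∂B_r(0)` at `x₀`, and half-aperture `π/2 − δ` :
`{x : arccos(⟨x₀−x, x₀⟩/(‖x₀−x‖‖x₀‖)) ≤ π/2−δ}`, expressed equivalently as
`cos(π/2−δ)‖x₀−x‖‖x₀‖ ≤ ⟨x₀−x, x₀⟩`. -/
def Kdelta {n : ℕ} (x₀ : EucSp n) (δ : ℝ) : Set (EucSp n) :=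
  {x | Real.cos (π / 2 - δ) * (‖x₀ - x‖ * ‖x₀‖) ≤ ⟪x₀ - x, x₀⟫}

/-- Tangent-line (convexity) bound for `t ↦ exp (-α t)` at `t = b`. -/
theorem exp_gap (α a b : ℝ) :
    α * Real.exp (-α * b) * (b - a) ≤ Real.exp (-α * a) - Real.exp (-α * b) := by
  have h1 : Real.exp (-α * a) = Real.exp (-α * b) * Real.exp (α * (b - a)) := by
    rw [← Real.exp_add]; ring_nf
  have h2 := mul_le_mul_of_nonneg_left (Real.add_one_le_exp (α * (b - a)))
    (Real.exp_pos (-α * b)).le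
  rw [h1]; linarith

/-- Inside the cone and close to the apex, `‖x‖²` drops below `‖x₀‖²` at least linearly in the
distance to `x₀`. -/
theorem cone_gap {n : ℕ} {x₀ x : EucSp n} {δ : ℝ} (hc : 0 ≤ Real.cos (π / 2 - δ))
    (hK : x ∈ Kdelta x₀ δ) (hd : ‖x - x₀‖ ≤ ‖x₀‖ / 2 * Real.cos (π / 2 - δ)) :
    ‖x₀‖ * Real.cos (π / 2 - δ) * ‖x - x₀‖ ≤ ‖x₀‖ ^ 2 - ‖x‖ ^ 2 := by
  have hK' : Real.cos (π / 2 - δ) * (‖x₀ - x‖ * ‖x₀‖) ≤ ⟪x₀ - x, x₀⟫ := hK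
  have h := norm_sub_sq_real x₀ (x₀ - x)
  rw [sub_sub_cancel, real_inner_comm] at h
  rw [norm_sub_rev x₀ x] at h hK'
  have hp := mul_nonneg (norm_nonneg x₀) hc
  nlinarith [mul_nonneg (norm_nonneg (x - x₀)) (sub_nonneg.2 hd),
    mul_nonneg (norm_nonneg (x - x₀)) hp]

/-- Quantitative auxiliary lemma for the Hopf lemma: if on the annulus
`R = B_r(0) ∖ closure B_ρ(0)` one has `u(x₀) − u(x) ≥ ε(e^{−α‖x‖²} − e^{−αr²})`, then for
every `0 < δ ≤ π/2`, with `ε' = α e^{−αr²} r cos(π/2−δ)` and `δ' = (r/2)cos(π/2−δ)`,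
one has `(u(x₀)−u(x))/‖x−x₀‖ ≥ ε'ε > 0` on `K_δ(x₀) ∩ R ∩ B_{δ'}(x₀)`. -/
theorem hopf_auxiliary {n : ℕ} (r ρ : ℝ) (hρ : 0 < ρ) (hρr : ρ < r)
    (α : ℝ) (hα : 0 < α)
    (x₀ : EucSp n) (hx₀ : x₀ ∈ Metric.sphere 0 r)
    (u : EucSp n → ℝ) (ε : ℝ) (hε : 0 < ε)
    (hu : ∀ x ∈ closure (Metric.ball (0 : EucSp n) r \ closure (Metric.ball 0 ρ)),
      ε * (Real.exp (-α * ‖x‖ ^ 2) - Real.exp (-α * r ^ 2)) ≤ u x₀ - u x) :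
    ∀ δ : ℝ, 0 < δ → δ ≤ π / 2 →
      0 < α * Real.exp (-α * r ^ 2) * r * Real.cos (π / 2 - δ) * ε ∧
      ∀ x ∈ Kdelta x₀ δ ∩ (Metric.ball (0 : EucSp n) r \ closure (Metric.ball 0 ρ)) ∩
          Metric.ball x₀ (r / 2 * Real.cos (π / 2 - δ)),
        α * Real.exp (-α * r ^ 2) * r * Real.cos (π / 2 - δ) * ε ≤
          (u x₀ - u x) / ‖x - x₀‖ := by
  intro δ hδ hδ'
  have hr : 0 < r := hρ.trans hρr
  have hn : ‖x₀‖ = r := by simpa using hx₀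
  have hc : 0 < Real.cos (π / 2 - δ) :=
    Real.cos_pos_of_mem_Ioo ⟨by linarith [Real.pi_pos], by linarith⟩
  refine ⟨by positivity, ?_⟩
  rintro x ⟨⟨hK, hR⟩, hB⟩
  have hd : ‖x - x₀‖ < r / 2 * Real.cos (π / 2 - δ) := by simpa [dist_eq_norm] using hB
  -- `x ≠ x₀`, since `‖x‖ < r = ‖x₀‖`; so the quotient is a genuine one.
  have hpos : 0 < ‖x - x₀‖ := by
    rw [norm_pos_iff, sub_ne_zero]
    rintro rfl
    have h1 : ‖x‖ < r := by simpa using hR.1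
    linarith
  rw [le_div_iff₀ hpos]
  have hgap := cone_gap hc.le hK (by rw [hn]; exact hd.le)
  rw [hn] at hgap
  calc α * Real.exp (-α * r ^ 2) * r * Real.cos (π / 2 - δ) * ε * ‖x - x₀‖
      = ε * (α * Real.exp (-α * r ^ 2) * (r * Real.cos (π / 2 - δ) * ‖x - x₀‖)) := by ring
    _ ≤ ε * (α * Real.exp (-α * r ^ 2) * (r ^ 2 - ‖x‖ ^ 2)) := by gcongr
    _ ≤ ε * (Real.exp (-α * ‖x‖ ^ 2) - Real.exp (-α * r ^ 2)) :=
        mul_le_mul_of_nonneg_left (exp_gap α _ _) hε.le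
    _ ≤ u x₀ - u x := hu x (subset_closure hR)

end
end

section
/- Let 1 ≤ l < n and write points of ℝⁿ as (x', y) with x' ∈ ℝ^l and y = (y₁,…,y_{n−l}) ∈ ℝ^{n−l}; let e := (0, e₁) ∈ ℝⁿ be the unit vector in the y₁-direction. Let U' ⊆ ℝ^l be an open neighborhood of 0, U'' ⊆ ℝ^{n−l} open, and φ = (φ₁,…,φ_{n−l}) : U' → U'' a C¹ map with φ(0) = 0 and Dφ(0) = 0, such that the gradient ∇φ₁ of the first component is Lipschitz on U' with constant c > 0. Let M := {(x', φ(x')) : x' ∈ U'} and let r̄ > 0 be such that closure(B_{r̄}(r̄·e)) ⊆ U' × U''. Then for every 0 < r ≤ r₀ := min{1/c, r̄}, the closed ball closure(B_r(r·e)) — which touches M at 0 and is tangent there to the hyperplane {y₁ = 0}, with inner normal e — satisfies closure(B_r(r·e)) ∩ M = {0}. -/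
/-!
A point `(x, φ x)` of the graph lies in the closed ball of radius `r` about `r • e` exactly when
`‖x‖² + ‖φ x‖² ≤ 2 r φ₁(x)`. Such a point has `‖x‖ ≤ r ≤ r̄`, so it projects into the ball of radius
`r̄` about `0` in `ℝˡ`, which is contained in `U'` by the assumption on the ball about `r̄ • e`.
On that convex ball, the first-order expansion at `0`
(`le_half_mul_norm_sq_of_lipschitzOnWith_fderiv`) gives `φ₁(x) ≤ (c / 2) ‖x‖²`.
Since `r c ≤ 1`, this yields `‖x‖² + φ₁(x)² ≤ ‖x‖²`, hence `φ₁(x) = 0`, and then the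
first inequality forces `x = 0`.
-/

open Filter Metric Set
open scoped NNReal

noncomputable section

/-- Quadratic upper bound for a function vanishing to first order at `0` whose derivative is
`c`-Lipschitz on a set containing the segment from `0` to `x`: along that segment
`t ↦ (c / 2) ‖x‖² t² - f (t • x)` has nonnegative derivative. -/
lemma le_half_mul_norm_sq_of_lipschitzOnWith_fderiv {E : Type*} [NormedAddCommGroup E]
    [NormedSpace ℝ E] {f : E → ℝ} {s : Set E} {c : ℝ≥0} {x : E}
    (hseg : ∀ t ∈ Icc (0 : ℝ) 1, t • x ∈ s) (hd : ∀ y ∈ s, DifferentiableAt ℝ f y)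
    (hL : LipschitzOnWith c (fderiv ℝ f) s) (h0 : f 0 = 0) (hD0 : fderiv ℝ f 0 = 0) :
    f x ≤ c / 2 * ‖x‖ ^ 2 := by
  have hder : ∀ t ∈ Icc (0 : ℝ) 1, HasDerivAt
      (fun t : ℝ => c / 2 * ‖x‖ ^ 2 * t ^ 2 - f (t • x))
      (c * ‖x‖ ^ 2 * t - fderiv ℝ f (t • x) x) t := by
    intro t ht
    have h1 : HasDerivAt (fun t : ℝ => t • x) x t := by
      simpa using (hasDerivAt_id t).smul_const x
    have h2 := (hd _ (hseg t ht)).hasFDerivAt.comp_hasDerivAt t h1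
    have h3 := ((hasDerivAt_pow 2 t).const_mul (c / 2 * ‖x‖ ^ 2)).sub h2
    refine h3.congr_deriv ?_
    push_cast
    ring
  have hmono : MonotoneOn (fun t : ℝ => c / 2 * ‖x‖ ^ 2 * t ^ 2 - f (t • x)) (Icc 0 1) := by
    refine monotoneOn_of_deriv_nonneg (convex_Icc 0 1)
      (fun t ht => (hder t ht).continuousAt.continuousWithinAt)
      (fun t ht => (hder t (interior_subset ht)).differentiableAt.differentiableWithinAt) ?_
    intro t ht
    have ht' := interior_subset ht
    rw [(hder t ht').deriv]
    have hs0 : (0 : E) ∈ s := by simpa using hseg 0 (by simp)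
    have h1 : ‖fderiv ℝ f (t • x)‖ ≤ c * (t * ‖x‖) := by
      have := hL.dist_le_mul _ (hseg t ht') _ hs0
      simpa [hD0, dist_eq_norm, norm_smul, abs_of_nonneg ht'.1] using this
    have h2 : fderiv ℝ f (t • x) x ≤ c * (t * ‖x‖) * ‖x‖ :=
      (Real.le_norm_self _).trans ((fderiv ℝ f (t • x)).le_of_opNorm_le h1 x)
    nlinarith
  have := hmono (left_mem_Icc.2 zero_le_one) (right_mem_Icc.2 zero_le_one) zero_le_one
  simp [h0] at this
  linarith

/-- Membership of `(x, y)` in the closed ball of radius `r` about `(0, r • e_i)`, with the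
square of the distance expanded. -/
lemma mem_closedBall_smul_single_iff {l m : ℕ} (i : Fin m) (x : EuclideanSpace ℝ (Fin l))
    (y : EuclideanSpace ℝ (Fin m)) {r : ℝ} (hr : 0 ≤ r) :
    (WithLp.equiv 2 _).symm (x, y) ∈ Metric.closedBall
      (r • (WithLp.equiv 2 _).symm
        ((0 : EuclideanSpace ℝ (Fin l)), EuclideanSpace.single i (1 : ℝ))) r ↔
      ‖x‖ ^ 2 + ‖y‖ ^ 2 ≤ 2 * r * y i := by
  rw [mem_closedBall, dist_eq_norm, ← sq_le_sq₀ (norm_nonneg _) hr, WithLp.prod_norm_sq_eq_of_L2]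
  have h1 : ‖y - r • EuclideanSpace.single i (1 : ℝ)‖ ^ 2 = ‖y‖ ^ 2 - 2 * r * y i + r ^ 2 := by
    rw [norm_sub_sq_real, norm_smul, inner_smul_right, EuclideanSpace.inner_single_right]
    simp
    ring
  have h2 : ‖x - r • (0 : EuclideanSpace ℝ (Fin l))‖ ^ 2 = ‖x‖ ^ 2 := by simp
  change ‖x - r • (0 : EuclideanSpace ℝ (Fin l))‖ ^ 2
    + ‖y - r • EuclideanSpace.single i (1 : ℝ)‖ ^ 2 ≤ r ^ 2 ↔ _
  rw [h1, h2]
  constructor <;> intro h <;> linarith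

/-- Touching-ball property for the graph of a `C^{1,1}` function:
write `ℝⁿ = ℝˡ × ℝ^{n−l}` (with the Euclidean, i.e. `ℓ²`, product norm), let
`φ : U' → U''` be `C¹` with `φ(0) = 0`, `Dφ(0) = 0` and `∇φ₁` Lipschitz with constant
`c > 0`, let `M` be the graph of `φ` over `U'`, `e` the unit vector in the `y₁`
direction, and `r̄ > 0` with `closure(B_{r̄}(r̄·e)) ⊆ U' × U''`.  Then for every
`0 < r ≤ min (1/c) r̄`, the closed ball of radius `r` centered at `r·e` meets `M`
exactly in `{0}`. -/
theorem touching_ball {l n : ℕ} (hl : 1 ≤ l) (hln : l < n)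
    (U' : Set (EuclideanSpace ℝ (Fin l))) (hU'o : IsOpen U') (hU'0 : (0 : _) ∈ U')
    (U'' : Set (EuclideanSpace ℝ (Fin (n - l)))) (hU''o : IsOpen U'')
    (φ : EuclideanSpace ℝ (Fin l) → EuclideanSpace ℝ (Fin (n - l)))
    (hφmem : ∀ x' ∈ U', φ x' ∈ U'')
    (hφC1 : ContDiffOn ℝ 1 φ U') (hφ0 : φ 0 = 0) (hDφ0 : fderiv ℝ φ 0 = 0)
    (c : ℝ≥0) (hc : 0 < c)
    (hLip : LipschitzOnWith c
      (fderiv ℝ (fun x' => φ x' (⟨0, by omega⟩ : Fin (n - l)))) U')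
    (e : WithLp 2 (EuclideanSpace ℝ (Fin l) × EuclideanSpace ℝ (Fin (n - l))))
    (he : e = (WithLp.equiv 2 _).symm
      ((0 : EuclideanSpace ℝ (Fin l)),
        EuclideanSpace.single (⟨0, by omega⟩ : Fin (n - l)) (1 : ℝ)))
    (M : Set (WithLp 2 (EuclideanSpace ℝ (Fin l) × EuclideanSpace ℝ (Fin (n - l)))))
    (hM : M = (fun x' => (WithLp.equiv 2 _).symm (x', φ x')) '' U')
    (rbar : ℝ) (hrbar : 0 < rbar)
    (hrbarin : Metric.closedBall (rbar • e) rbar ⊆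
      {p | ((WithLp.equiv 2 _) p).1 ∈ U' ∧ ((WithLp.equiv 2 _) p).2 ∈ U''}) :
    ∀ r : ℝ, 0 < r → r ≤ min (1 / (c : ℝ)) rbar →
      Metric.closedBall (r • e) r ∩ M = {0} := by
  intro r hr hrle
  have hcr : r * c ≤ 1 := by
    have := hrle.trans (min_le_left _ _)
    rwa [le_div_iff₀ (by exact_mod_cast hc)] at this
  have hrr : r ≤ rbar := hrle.trans (min_le_right _ _)
  subst he hM
  set i : Fin (n - l) := ⟨0, by omega⟩ with hi
  -- The points `(x, r̄ • e₁)` with `‖x‖ ≤ r̄` lie in the large ball.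
  have hball : ∀ x : EuclideanSpace ℝ (Fin l), ‖x‖ ≤ rbar → x ∈ U' := by
    intro x hx
    have hmem := (mem_closedBall_smul_single_iff i x
      (rbar • EuclideanSpace.single i (1 : ℝ)) hrbar.le).2 (by
        simp [norm_smul]
        nlinarith [norm_nonneg x])
    exact (hrbarin hmem).1
  have hdφ : ∀ x ∈ U', DifferentiableAt ℝ φ x := fun x hx =>
    (hφC1.differentiableOn (by simp)).differentiableAt (hU'o.mem_nhds hx)
  have hcoord : ∀ x ∈ U', HasFDerivAt (fun x' => φ x' i)
      ((EuclideanSpace.proj i : EuclideanSpace ℝ (Fin (n - l)) →L[ℝ] ℝ).comp (fderiv ℝ φ x)) x :=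
    fun x hx => (EuclideanSpace.proj i : EuclideanSpace ℝ (Fin (n - l)) →L[ℝ] ℝ).hasFDerivAt.comp x
      (hdφ x hx).hasFDerivAt
  apply Subset.antisymm
  · rintro _ ⟨hp, x, hx, rfl⟩
    have hp' := (mem_closedBall_smul_single_iff i x (φ x) hr.le).1 hp
    have hφi : (φ x i) ^ 2 ≤ ‖φ x‖ ^ 2 := by
      have := PiLp.norm_apply_le (φ x) i
      rw [← sq_abs (φ x i)]
      exact pow_le_pow_left₀ (abs_nonneg _) this 2
    have hxr : ‖x‖ ≤ r := by
      rw [← sq_le_sq₀ (norm_nonneg _) hr.le]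
      nlinarith [sq_nonneg (φ x i - r)]
    have hquad : φ x i ≤ c / 2 * ‖x‖ ^ 2 := by
      refine le_half_mul_norm_sq_of_lipschitzOnWith_fderiv (f := fun x' => φ x' i) (s := U')
        (fun t ht => hball _ ?_) (fun y hy => (hcoord y hy).differentiableAt) hLip
        (by simp [hφ0]) (by rw [(hcoord 0 hU'0).fderiv, hDφ0]; simp)
      rw [norm_smul, Real.norm_of_nonneg ht.1]
      nlinarith [norm_nonneg x, ht.1, ht.2]
    have h1 : 2 * r * φ x i ≤ ‖x‖ ^ 2 := by
      calc 2 * r * φ x i ≤ 2 * r * (c / 2 * ‖x‖ ^ 2) := by gcongr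
        _ = r * c * ‖x‖ ^ 2 := by ring
        _ ≤ 1 * ‖x‖ ^ 2 := by gcongr
        _ = ‖x‖ ^ 2 := one_mul _
    have h2 : φ x i = 0 := by
      have : (φ x i) ^ 2 = 0 := le_antisymm (by linarith) (sq_nonneg _)
      exact pow_eq_zero_iff two_ne_zero |>.1 this
    have h3 : x = 0 := by
      rw [h2, mul_zero] at hp'
      have : ‖x‖ ^ 2 = 0 := le_antisymm (by nlinarith [sq_nonneg ‖φ x‖]) (sq_nonneg _)
      exact norm_eq_zero.1 (pow_eq_zero_iff two_ne_zero |>.1 this)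
    subst h3
    simp only [hφ0, mem_singleton_iff]
    rfl
  · rintro _ rfl
    refine ⟨?_, 0, hU'0, by simp only [hφ0]; rfl⟩
    exact (mem_closedBall_smul_single_iff i (0 : EuclideanSpace ℝ (Fin l)) 0 hr.le).2 (by simp)

end
end
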